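/- arXiv:2212.01787 — 3 statements merged into one kernel-verified Lean document; each statement's English description precedes it below -/
import Mathlib

section
/- Let L, M, N be sharp commutative monoids and f : N → M, g : N → L local morphisms of monoids. Then the push-out M ⊔_N L is quasi-integral if and only if for all m ∈ M, l ∈ L, n ∈ N^gp, the equalities f^gp(n) = η_M(m) and -g^gp(n) = η_L(l) (where η denotes the canonical map to the groupification) imply m = 0 and l = 0. -/
/-- `η : M →+ G` exhibits the abelian group `G` as the groupification of the
commutative monoid `M`. -/
def IsGroupification {M G : Type*} [AddCommMonoid M] [AddCommGroup G] (η : M →+ G) : Prop :=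
  (∀ x : G, ∃ a b : M, x = η a - η b) ∧
  (∀ a b : M, η a = η b ↔ ∃ k : M, a + k = b + k)

/-- A commutative monoid is sharp if its unit group is trivial. -/
def IsSharp (M : Type*) [AddCommMonoid M] : Prop := ∀ x : M, IsAddUnit x → x = 0

/-- A morphism of monoids is local if the preimage of the unit group is the unit group. -/
def IsLocalMonoidHom {N M : Type*} [AddCommMonoid N] [AddCommMonoid M] (f : N →+ M) : Prop :=
  ∀ n : N, IsAddUnit (f n) → IsAddUnit n

/-- `(P, iM, iL)` is the push-out `M ⊔_N L` of `f : N →+ M` and `g : N →+ L` in the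
category of commutative monoids. -/
def IsMonPushout {N M L P : Type*} [AddCommMonoid N] [AddCommMonoid M] [AddCommMonoid L]
    [AddCommMonoid P] (f : N →+ M) (g : N →+ L) (iM : M →+ P) (iL : L →+ P) : Prop :=
  iM.comp f = iL.comp g ∧
  ∀ (Q : Type*) [AddCommMonoid Q] (jM : M →+ Q) (jL : L →+ Q),
    jM.comp f = jL.comp g → ∃! h : P →+ Q, h.comp iM = jM ∧ h.comp iL = jL

/-- The saturation of a subset `P` of an abelian group `G`:
`P^sat = { x ∈ G | ∃ a ≥ 1, a • x ∈ P }`. -/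
def saturationOf {G : Type*} [AddCommGroup G] (P : Set G) : Set G :=
  {x : G | ∃ a : ℕ, 0 < a ∧ a • x ∈ P}


theorem s6_state0 {H : Type*} [AddCommGroup H] (D : AddSubmonoid H) (u : H)
    (htot : ∀ a, a ∈ D ∨ -a ∈ D) (hu : u ∈ D) (hnu : -u ∉ D)
    (hou : ∀ a, ∃ n : ℕ, n • u - a ∈ D) :
    ∃ s : H →+ ℝ, s u = 1 ∧ ∀ c ∈ D, 0 ≤ s c := by
  have key : ∀ j : ℤ, j • u ∈ D → 0 ≤ j := by
    intro j hj
    by_contra hneg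
    push Not at hneg
    apply hnu
    have h1 : (-j - 1).toNat • u ∈ D := D.nsmul_mem hu _
    have h2 := D.add_mem hj h1
    rw [← natCast_zsmul, Int.toNat_of_nonneg (by omega), ← add_zsmul] at h2
    have : j + (-j - 1) = -1 := by ring
    rw [this] at h2
    simpa using h2
  let S : H → Set ℝ := fun a => {q | ∃ (k : ℤ) (n : ℕ), 0 < n ∧ q = k / n ∧ (n : ℤ) • a - k • u ∈ D}
  have cmp : ∀ (a : H) (k k' : ℤ) (n n' : ℕ), 0 < n → 0 < n' → k • u - (n : ℤ) • a ∈ D →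
      (n' : ℤ) • a - k' • u ∈ D → (k' : ℝ) / n' ≤ k / n := by
    intro a k k' n n' hn hn' h1 h2
    have h3 := D.add_mem (D.nsmul_mem h1 n') (D.nsmul_mem h2 n)
    have h4 : n' • (k • u - (n : ℤ) • a) + n • ((n' : ℤ) • a - k' • u)
        = ((n' : ℤ) * k - n * k') • u := by
      simp only [← natCast_zsmul]
      module
    rw [h4] at h3
    have h5 := key _ h3
    rw [div_le_div_iff₀ (by positivity) (by positivity)]
    have h6 : (k' * n : ℤ) ≤ k * n' := by linarith
    exact_mod_cast h6
  let s : H → ℝ := fun a => sSup (S a)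
  have hne : ∀ a, (S a).Nonempty := by
    intro a
    obtain ⟨n, hn⟩ := hou (-a)
    refine ⟨_, -(n : ℤ), 1, one_pos, rfl, ?_⟩
    convert hn using 1
    simp only [← natCast_zsmul]
    module
  have hup : ∀ (a : H) (k : ℤ) (n : ℕ), 0 < n → k • u - (n : ℤ) • a ∈ D → s a ≤ k / n := by
    intro a k n hn h
    apply csSup_le (hne a)
    rintro q ⟨k', n', hn', rfl, h'⟩
    exact cmp a k k' n n' hn hn' h h'
  have hbd : ∀ a, BddAbove (S a) := by
    intro a
    obtain ⟨n, hn⟩ := hou a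
    refine ⟨((n : ℤ) : ℝ) / (1 : ℕ), ?_⟩
    rintro q ⟨k', n', hn', rfl, h'⟩
    refine cmp a n k' 1 n' one_pos hn' ?_ h'
    simpa using hn
  have hlo : ∀ (a : H) (k : ℤ) (n : ℕ), 0 < n → (n : ℤ) • a - k • u ∈ D → (k : ℝ) / n ≤ s a := by
    intro a k n hn h
    exact le_csSup (hbd a) ⟨k, n, hn, rfl, h⟩
  have happ : ∀ (a : H) (n : ℕ), 0 < n → ∃ k : ℤ, (k : ℝ) ≤ n * s a ∧ n * s a ≤ k + 2 ∧
      (n : ℤ) • a - k • u ∈ D ∧ (k + 2) • u - (n : ℤ) • a ∈ D := by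
    intro a n hn
    have hn' : (0 : ℝ) < n := by exact_mod_cast hn
    have h1 := Int.ceil_lt_add_one ((n : ℝ) * s a)
    have h2 := Int.le_ceil ((n : ℝ) * s a)
    refine ⟨⌈(n : ℝ) * s a⌉ - 1, ?_, ?_, ?_, ?_⟩
    · push_cast; linarith
    · push_cast; linarith
    · rcases htot ((n : ℤ) • a - (⌈(n : ℝ) * s a⌉ - 1) • u) with h | h
      · exact h
      · exfalso
        rw [neg_sub] at h
        have := hup a _ n hn h
        rw [le_div_iff₀ hn'] at this
        push_cast at this
        linarith
    · rcases htot ((⌈(n : ℝ) * s a⌉ - 1 + 2) • u - (n : ℤ) • a) with h | h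
      · exact h
      · exfalso
        rw [neg_sub] at h
        have := hlo a _ n hn h
        rw [div_le_iff₀ hn'] at this
        push_cast at this
        linarith
  have hadd : ∀ a b, s (a + b) = s a + s b := by
    intro a b
    have hb : ∀ n : ℕ, 0 < n → n * |s (a + b) - (s a + s b)| ≤ 4 := by
      intro n hn
      have hn' : (0 : ℝ) < n := by exact_mod_cast hn
      obtain ⟨k, h1, h2, h3, h4⟩ := happ a n hn
      obtain ⟨l, i1, i2, i3, i4⟩ := happ b n hn
      have e1 := hlo (a + b) (k + l) n hn (by
        convert D.add_mem h3 i3 using 1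
        module)
      have e2 := hup (a + b) (k + 2 + (l + 2)) n hn (by
        convert D.add_mem h4 i4 using 1
        module)
      rw [div_le_iff₀ hn'] at e1
      rw [le_div_iff₀ hn'] at e2
      push_cast at e1 e2
      rw [← abs_of_pos hn', ← abs_mul, abs_le]
      constructor <;> nlinarith
    by_contra hne'
    have hpos : 0 < |s (a + b) - (s a + s b)| := abs_pos.mpr (sub_ne_zero.mpr hne')
    obtain ⟨n, hn⟩ := exists_nat_gt (4 / |s (a + b) - (s a + s b)|)
    rw [div_lt_iff₀ hpos] at hn
    rcases Nat.eq_zero_or_pos n with rfl | hn0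
    · norm_num at hn
    · linarith [hb n hn0]
  refine ⟨AddMonoidHom.mk' s hadd, ?_, ?_⟩
  · change s u = 1
    apply le_antisymm
    · simpa using hup u 1 1 one_pos (by simp)
    · simpa using hlo u 1 1 one_pos (by simp)
  · intro c hc
    change 0 ≤ s c
    simpa using hlo c 0 1 one_pos (by simpa using hc)

theorem s6_state1 {H : Type*} [AddCommGroup H] (C : AddSubmonoid H) (u : H)
    (hu : u ∈ C) (hnu : -u ∉ C) (hou : ∀ a, ∃ n : ℕ, n • u - a ∈ C) :
    ∃ s : H →+ ℝ, s u = 1 ∧ ∀ c ∈ C, 0 ≤ s c := by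
  obtain ⟨D, hCD, hD⟩ := zorn_le_nonempty₀ {D : AddSubmonoid H | -u ∉ D} (by
    intro c hc hch y hy
    refine ⟨sSup c, ?_, fun z hz => le_sSup hz⟩
    intro hmem
    rw [AddSubmonoid.mem_sSup_of_directedOn ⟨y, hy⟩ hch.directedOn] at hmem
    obtain ⟨s, hs, hs'⟩ := hmem
    exact hc hs hs') C hnu
  have hDu : -u ∉ D := hD.prop
  have huD := hCD hu
  have hext : ∀ a, a ∉ D → ∃ d ∈ D, ∃ n : ℕ, 0 < n ∧ d + n • a = -u := by
    intro a ha
    have h1 : -u ∈ D ⊔ AddSubmonoid.multiples a := by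
      by_contra hcon
      have := hD.le_of_ge (y := D ⊔ AddSubmonoid.multiples a) hcon le_sup_left
      exact ha (this (AddSubmonoid.mem_sup_right (AddSubmonoid.mem_multiples a)))
    obtain ⟨d, hd, z, ⟨n, rfl⟩, hz⟩ := AddSubmonoid.mem_sup.mp h1
    refine ⟨d, hd, n, ?_, hz⟩
    rcases Nat.eq_zero_or_pos n with rfl | h
    · exfalso
      apply hDu
      rw [← hz]
      simpa using hd
    · exact h
  obtain ⟨s, h1, h2⟩ := s6_state0 D u (by
    intro a
    by_contra hcon
    push Not at hcon
    obtain ⟨d, hd, n, hn, e⟩ := hext a hcon.1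
    obtain ⟨d', hd', n', hn', e'⟩ := hext (-a) hcon.2
    apply hDu
    have h3 := D.add_mem (D.add_mem (D.nsmul_mem hd n') (D.nsmul_mem hd' n))
      (D.nsmul_mem huD (n + n' - 1))
    convert h3 using 1
    obtain rfl : d = -u - n • a := by rw [← e]; abel
    obtain rfl : d' = -u - n' • (-a) := by rw [← e']; abel
    obtain ⟨k, rfl⟩ : ∃ k, n = k + 1 := ⟨n - 1, by omega⟩
    have : k + 1 + n' - 1 = k + n' := by omega
    rw [this]
    simp only [← natCast_zsmul]
    push_cast
    module) huD hDu (fun a => (hou a).imp fun n hn => hCD hn)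
  exact ⟨s, h1, fun c hc => h2 c (hCD hc)⟩

theorem s6_state {A : Type*} [AddCommGroup A] (C : AddSubmonoid A) (u : A)
    (hu : u ∈ C) (hnu : -u ∉ C) (hou : ∀ a ∈ C, ∃ n : ℕ, n • u - a ∈ C) :
    ∃ s : A →+ ℝ, s u = 1 ∧ ∀ c ∈ C, 0 ≤ s c := by
  let H := AddSubgroup.closure (C : Set A)
  have hCH : ∀ c ∈ C, c ∈ H := fun c hc => AddSubgroup.subset_closure hc
  have hH : ∀ a ∈ H, (∃ n : ℕ, n • u - a ∈ C) ∧ (∃ n : ℕ, n • u - -a ∈ C) := by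
    intro a ha
    induction ha using AddSubgroup.closure_induction with
    | mem x hx => exact ⟨hou x hx, 0, by simpa using hx⟩
    | zero => exact ⟨⟨0, by simp⟩, 0, by simp⟩
    | add x y _ _ hx hy =>
      obtain ⟨⟨n, h1⟩, ⟨n', h2⟩⟩ := hx
      obtain ⟨⟨k, i1⟩, ⟨k', i2⟩⟩ := hy
      refine ⟨⟨n + k, ?_⟩, ⟨n' + k', ?_⟩⟩
      · convert C.add_mem h1 i1 using 1
        rw [add_nsmul]; abel
      · convert C.add_mem h2 i2 using 1
        rw [add_nsmul]; abel
    | neg x _ hx => exact ⟨hx.2, by simpa using hx.1⟩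
  obtain ⟨s, h1, h2⟩ := s6_state1 (C.comap H.subtype) (⟨u, hCH u hu⟩ : H) hu hnu
    (fun a => (hH a a.2).1)
  have hB : Module.Baer ℤ ℝ := Module.Baer.of_divisible (A := ℝ) 
  obtain ⟨t, ht⟩ := Module.Baer.extension_property_addMonoidHom hB H.subtype
    H.subtype_injective s
  refine ⟨t, ?_, ?_⟩
  · rw [← h1, ← ht]; rfl
  · intro c hc
    have := h2 ⟨c, hCH c hc⟩ hc
    rw [← ht] at this
    exact this

open Classical in
/-- The map to `WithTop Q` equal to `c` on the face `T` and to `⊤` off it. -/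
noncomputable def s6toTop {P Q : Type*} [AddCommMonoid P] [AddCommMonoid Q] (T : AddSubmonoid P)
    (hT : ∀ x y, x + y ∈ T → x ∈ T) (c : P → Q) (h0 : c 0 = 0)
    (hc : ∀ x ∈ T, ∀ y ∈ T, c (x + y) = c x + c y) : P →+ WithTop Q where
  toFun x := if x ∈ T then ((c x : Q) : WithTop Q) else ⊤
  map_zero' := by simp [h0]
  map_add' x y := by
    by_cases hx : x ∈ T
    · by_cases hy : y ∈ T
      · simp [hx, hy, T.add_mem hx hy, hc x hx y hy]
      · have : x + y ∉ T := fun h => hy (hT y x (by rwa [add_comm]))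
        simp [hy, this]
    · have : x + y ∉ T := fun h => hx (hT x y h)
      simp [hx, this]

theorem s6toTop_mem {P Q : Type*} [AddCommMonoid P] [AddCommMonoid Q] {T : AddSubmonoid P}
    (hT : ∀ x y, x + y ∈ T → x ∈ T) {c : P → Q} (h0 : c 0 = 0)
    (hc : ∀ x ∈ T, ∀ y ∈ T, c (x + y) = c x + c y) {x : P} (hx : x ∈ T) :
    s6toTop T hT c h0 hc x = (c x : WithTop Q) := by
  simp [s6toTop, hx]

theorem s6toTop_not {P Q : Type*} [AddCommMonoid P] [AddCommMonoid Q] {T : AddSubmonoid P}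
    (hT : ∀ x y, x + y ∈ T → x ∈ T) {c : P → Q} (h0 : c 0 = 0)
    (hc : ∀ x ∈ T, ∀ y ∈ T, c (x + y) = c x + c y) {x : P} (hx : x ∉ T) :
    s6toTop T hT c h0 hc x = ⊤ := by
  simp [s6toTop, hx]

theorem s6_core {K P A : Type*} [AddCommMonoid K] [AddCommMonoid P] [AddCommGroup A]
    (i : K →+ P) (η : P →+ A)
    (hU : ∀ (Q : Type) [AddCommMonoid Q] (h1 h2 : P →+ Q), (∀ z, h1 (i z) = h2 (i z)) → h1 = h2)
    (hE : ∀ (Q : Type) [AddCommMonoid Q] (σ : K →+ Q), (∀ z z', i z = i z' → σ z = σ z') →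
      ∃ h : P →+ Q, ∀ z, h (i z) = σ z)
    (hS : ∀ z, η (i z) = 0 → z = 0)
    (hK : ∀ a b : K, a + b = 0 → a = 0) (p : P) (hp : η p = 0) : p = 0 := by
  -- faces are determined by their trace on `K`
  have faceEq : ∀ T T' : AddSubmonoid P, (∀ x y, x + y ∈ T → x ∈ T) →
      (∀ x y, x + y ∈ T' → x ∈ T') → (∀ z, i z ∈ T ↔ i z ∈ T') → ∀ y, y ∈ T → y ∈ T' := by
    intro T T' hT hT' h y hy
    have e := hU _ (s6toTop T hT (fun _ => (0 : ℤ)) rfl (by simp))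
      (s6toTop T' hT' (fun _ => (0 : ℤ)) rfl (by simp)) (by
        intro z
        by_cases hz : i z ∈ T
        · rw [s6toTop_mem hT _ _ hz, s6toTop_mem hT' _ _ ((h z).1 hz)]
        · rw [s6toTop_not hT _ _ hz, s6toTop_not hT' _ _ (fun h' => hz ((h z).2 h'))])
    by_contra hy'
    have e1 := DFunLike.congr_fun e y
    rw [s6toTop_mem hT _ _ hy, s6toTop_not hT' _ _ hy'] at e1
    exact WithTop.coe_ne_top e1
  have faceMono : ∀ T T' : AddSubmonoid P, (∀ x y, x + y ∈ T → x ∈ T) →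
      (∀ x y, x + y ∈ T' → x ∈ T') → (∀ z, i z ∈ T → i z ∈ T') → ∀ y, y ∈ T → y ∈ T' := by
    intro T T' hT hT' h y hy
    exact (faceEq T (T ⊓ T') hT (fun x y hxy => ⟨hT x y hxy.1, hT' x y hxy.2⟩)
      (fun z => ⟨fun hz => ⟨hz, h z hz⟩, fun hz => hz.1⟩) y hy).2
  have faceEx : ∀ G : AddSubmonoid K, (∀ x y, x + y ∈ G → x ∈ G) →
      (∀ z z', i z = i z' → z ∈ G → z' ∈ G) →
      ∃ T : AddSubmonoid P, (∀ x y, x + y ∈ T → x ∈ T) ∧ ∀ z, i z ∈ T ↔ z ∈ G := by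
    intro G hG hc
    obtain ⟨h, hh⟩ := hE _ (s6toTop G hG (fun _ => (0 : ℤ)) rfl (by simp)) (by
      intro z z' hz
      by_cases hzG : z ∈ G
      · rw [s6toTop_mem hG _ _ hzG, s6toTop_mem hG _ _ (hc z z' hz hzG)]
      · rw [s6toTop_not hG _ _ hzG,
          s6toTop_not hG _ _ (fun h' => hzG (hc z' z hz.symm h'))])
    refine ⟨⟨⟨{y | h y ≠ ⊤}, ?_⟩, ?_⟩, ?_, ?_⟩
    · intro a b ha hb
      simp only [Set.mem_ofPred_eq, map_add] at *
      exact WithTop.add_ne_top.mpr ⟨ha, hb⟩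
    · simp
    · intro x y hxy
      have hxy' : h (x + y) ≠ ⊤ := hxy
      rw [map_add] at hxy'
      exact (WithTop.add_ne_top.mp hxy').1
    · intro z
      change h (i z) ≠ ⊤ ↔ _
      rw [hh]
      by_cases hzG : z ∈ G
      · rw [s6toTop_mem hG _ _ hzG]; simpa using hzG
      · rw [s6toTop_not hG _ _ hzG]; simpa using hzG
  -- the face generated by `p`
  let T : AddSubmonoid P :=
    { carrier := {y | ∃ (n : ℕ) (z : P), y + z = n • p}
      zero_mem' := ⟨0, 0, by simp⟩
      add_mem' := by
        rintro a b ⟨n, z, h⟩ ⟨n', z', h'⟩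
        refine ⟨n + n', z + z', ?_⟩
        rw [add_nsmul, ← h, ← h']; abel }
  have hT : ∀ x y, x + y ∈ T → x ∈ T := by
    rintro x y ⟨n, z, h⟩
    exact ⟨n, y + z, by rw [← h, add_assoc]⟩
  have hpT : p ∈ T := ⟨1, 0, by simp⟩
  -- the faces generated by elements of `K`
  let G : K → AddSubmonoid K := fun X =>
    { carrier := {z | ∃ (n : ℕ) (w : K), i (z + w) = n • i X}
      zero_mem' := ⟨0, 0, by simp⟩
      add_mem' := by
        rintro a b ⟨n, z, h⟩ ⟨n', z', h'⟩
        refine ⟨n + n', z + z', ?_⟩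
        rw [add_nsmul, ← h, ← h', ← map_add]; congr 1; abel }
  have hGf : ∀ X, ∀ x y, x + y ∈ G X → x ∈ G X := by
    rintro X x y ⟨n, z, h⟩
    exact ⟨n, y + z, by rw [← h, add_assoc]⟩
  have hGc : ∀ X, ∀ z z', i z = i z' → z ∈ G X → z' ∈ G X := by
    rintro X z z' hz ⟨n, w, h⟩
    exact ⟨n, w, by rw [← h, map_add, map_add, hz]⟩
  have hGself : ∀ X, X ∈ G X := fun X => ⟨1, 0, by simp⟩
  choose T' hT'f hT' using fun X => faceEx (G X) (hGf X) (hGc X)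
  have hGadd : ∀ X Y z, z ∈ G X → z ∈ G (X + Y) := by
    rintro X Y z ⟨n, w, h⟩
    refine ⟨n, w + n • Y, ?_⟩
    rw [← add_assoc, map_add, h, map_add, nsmul_add, map_nsmul]
  have hT'add : ∀ X Y y, y ∈ T' X → y ∈ T' (X + Y) := fun X Y =>
    faceMono _ _ (hT'f _) (hT'f _) (fun z hz => (hT' _ z).2 (hGadd X Y z ((hT' X z).1 hz)))
  let V : AddSubmonoid P :=
    { carrier := {y | ∃ X, i X ∈ T ∧ y ∈ T' X}
      zero_mem' := ⟨0, by rw [map_zero]; exact T.zero_mem, (T' 0).zero_mem⟩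
      add_mem' := by
        rintro a b ⟨X, hX, ha⟩ ⟨Y, hY, hb⟩
        refine ⟨X + Y, by rw [map_add]; exact T.add_mem hX hY,
          (T' _).add_mem (hT'add X Y a ha) ?_⟩
        rw [add_comm X Y]
        exact hT'add Y X b hb }
  have hV : ∀ x y, x + y ∈ V → x ∈ V := by
    rintro x y ⟨X, hX, h⟩
    exact ⟨X, hX, hT'f X x y h⟩
  obtain ⟨X, hXT, hpX⟩ : p ∈ V :=
    faceMono T V hT hV (fun z hz => ⟨z, hz, (hT' z z).2 (hGself z)⟩) p hpT
  have hTG : ∀ z, i z ∈ T → z ∈ G X := by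
    rintro z ⟨n, w, h⟩
    rw [← hT']
    apply hT'f X _ w
    rw [h]
    exact (T' X).nsmul_mem hpX n
  by_cases hX0 : X = 0
  · -- `p` is a unit
    subst hX0
    have hT0 : ∀ z, i z ∈ T → z = 0 := by
      intro z hz
      obtain ⟨n, w, h⟩ := hTG z hz
      apply hK z w
      apply hS
      rw [h]; simp
    let U : AddSubmonoid P := IsAddUnit.addSubmonoid P
    have hUf : ∀ x y, x + y ∈ U → x ∈ U := fun x y h => isAddUnit_of_add_isAddUnit_left h
    have hpU : p ∈ U := faceMono T U hT hUf (fun z hz => by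
      rw [hT0 z hz, map_zero]; exact U.zero_mem) p hpT
    have hUT : ∀ y, y ∈ U → y ∈ T := by
      rintro y ⟨v, rfl⟩
      exact ⟨0, ((-v : AddUnits P) : P), by simp⟩
    have hpU' : IsAddUnit p := hpU
    obtain ⟨v, hv⟩ := hpU'
    by_contra hp0
    have hv0 : v ≠ 0 := by
      rintro rfl
      exact hp0 (by rw [← hv]; rfl)
    obtain ⟨c, hc⟩ := CharacterModule.exists_character_apply_ne_zero_of_ne_zero hv0
    classical
    let c' : P → AddCircle (1 : ℚ) := fun y => if h : IsAddUnit y then c h.addUnit else 0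
    have hc' : ∀ w : AddUnits P, c' w = c w := by
      intro w
      have : IsAddUnit (w : P) := w.isAddUnit
      simp only [c', this, dif_pos]
      congr 1
      ext; rfl
    have hc'0 : c' 0 = 0 := by
      have := hc' 0
      rw [AddUnits.val_zero] at this
      rw [this]
      exact map_zero c
    have hc'a : ∀ x ∈ U, ∀ y ∈ U, c' (x + y) = c' x + c' y := by
      rintro _ ⟨x, rfl⟩ _ ⟨y, rfl⟩
      rw [← AddUnits.val_add, hc', hc', hc']
      exact map_add c x y
    have e := hU _ (s6toTop U hUf c' hc'0 hc'a)
      (s6toTop U hUf (fun _ => (0 : AddCircle (1 : ℚ))) rfl (by simp)) (by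
        intro z
        by_cases hz : i z ∈ U
        · rw [s6toTop_mem hUf _ _ hz, s6toTop_mem hUf _ _ hz, hT0 z (hUT _ hz), map_zero, hc'0]
        · rw [s6toTop_not hUf _ _ hz, s6toTop_not hUf _ _ hz])
    have e1 := DFunLike.congr_fun e p
    rw [s6toTop_mem hUf _ _ hpU, s6toTop_mem hUf _ _ hpU, WithTop.coe_inj, ← hv, hc'] at e1
    exact hc e1
  · exfalso
    let C : AddSubmonoid A := (T.comap i).map (η.comp i)
    obtain ⟨s, hs1, hs⟩ := s6_state C (η (i X)) ⟨X, hXT, rfl⟩ (by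
      rintro ⟨z, hz, e⟩
      have e' : η (i z) = - η (i X) := e
      have : η (i (X + z)) = 0 := by rw [map_add, map_add, e']; simp
      exact hX0 (hK _ _ (hS _ this))) (by
      rintro _ ⟨z, hz, rfl⟩
      obtain ⟨n, w, h⟩ := hTG z hz
      refine ⟨n, w, ?_, ?_⟩
      · apply hT (i w) (i z)
        rw [add_comm, ← map_add, h]
        exact T.nsmul_mem hXT n
      · change η (i w) = n • η (i X) - η (i z)
        rw [← map_nsmul, ← h, map_add, map_add]; abel)
    have hsT : ∀ z, i z ∈ T → 0 ≤ s (η (i z)) := fun z hz => hs _ ⟨z, hz, rfl⟩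
    have hTc : ∀ x y, x + y ∈ T.comap i → x ∈ T.comap i := by
      intro x y h
      apply hT (i x) (i y)
      rw [← map_add]; exact h
    let c2 : K → NNReal := fun z => (s (η (i z))).toNNReal
    have hc20 : c2 0 = 0 := by simp [c2]
    have hc2a : ∀ x ∈ T.comap i, ∀ y ∈ T.comap i, c2 (x + y) = c2 x + c2 y := by
      intro x hx y hy
      simp only [c2, map_add]
      exact Real.toNNReal_add (hsT x hx) (hsT y hy)
    obtain ⟨h2, hh2⟩ := hE _ (s6toTop (T.comap i) hTc c2 hc20 hc2a) (by
      intro z z' hz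
      by_cases hzT : i z ∈ T
      · have hz' : i z' ∈ T := hz ▸ hzT
        rw [s6toTop_mem hTc hc20 hc2a (x := z) hzT, s6toTop_mem hTc hc20 hc2a (x := z') hz']
        simp only [c2, hz]
      · have hz' : i z' ∉ T := hz ▸ hzT
        rw [s6toTop_not hTc hc20 hc2a (x := z) hzT, s6toTop_not hTc hc20 hc2a (x := z') hz'])
    let r : WithTop NNReal →+ WithTop ℝ := (NNReal.toRealHom : NNReal →+ ℝ).withTopMap
    have e := hU _ (s6toTop T hT (fun y => s (η y)) (by simp) (by simp)) (r.comp h2) (by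
      intro z
      rw [AddMonoidHom.comp_apply, hh2]
      by_cases hz : i z ∈ T
      · rw [s6toTop_mem hT _ _ hz, s6toTop_mem hTc hc20 hc2a (x := z) hz]
        change _ = (((c2 z : NNReal) : ℝ) : WithTop ℝ)
        rw [Real.coe_toNNReal _ (hsT z hz)]
      · rw [s6toTop_not hT _ _ hz, s6toTop_not hTc hc20 hc2a (x := z) hz]
        rfl)
    have hnn : ∀ y ∈ T, 0 ≤ s (η y) := by
      intro y hy
      have e1 := DFunLike.congr_fun e y
      rw [s6toTop_mem hT _ _ hy, AddMonoidHom.comp_apply] at e1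
      rcases h3 : h2 y with _ | q
      · rw [h3] at e1
        exact absurd e1 WithTop.coe_ne_top
      · rw [h3] at e1
        have e2 : ((s (η y) : ℝ) : WithTop ℝ) = ((q : ℝ) : WithTop ℝ) := e1
        rw [WithTop.coe_inj.mp e2]
        exact q.2
    obtain ⟨n, y, h⟩ := hXT
    have hy : y ∈ T := hT y (i X) ⟨n, 0, by rw [add_zero, add_comm, h]⟩
    have h5 : s (η (i X)) + s (η y) = 0 := by
      rw [← map_add, ← map_add, h, map_nsmul, hp]; simp
    linarith [hnn y hy]

universe s6u1 s6u2 s6u3 s6u4 s6u5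

theorem s6_unlift {N : Type s6u1} {M : Type s6u2} {L : Type s6u3} {P : Type s6u4}
    [AddCommMonoid N] [AddCommMonoid M] [AddCommMonoid L]
    [AddCommMonoid P] {f : N →+ M} {g : N →+ L} {iM : M →+ P} {iL : L →+ P}
    (hpo : IsMonPushout.{s6u1, s6u2, s6u3, s6u4, s6u5} f g iM iL)
    (Q : Type) [AddCommMonoid Q] (jM : M →+ Q) (jL : L →+ Q) (h : jM.comp f = jL.comp g) :
    ∃! h : P →+ Q, h.comp iM = jM ∧ h.comp iL = jL := by
  let d : ULift.{s6u5} Q ≃+ Q := AddEquiv.ulift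
  obtain ⟨k, ⟨hk1, hk2⟩, hk3⟩ := hpo.2 (ULift.{s6u5} Q) (d.symm.toAddMonoidHom.comp jM)
    (d.symm.toAddMonoidHom.comp jL) (by rw [AddMonoidHom.comp_assoc, h, AddMonoidHom.comp_assoc])
  refine ⟨d.toAddMonoidHom.comp k, ⟨?_, ?_⟩, ?_⟩
  · rw [AddMonoidHom.comp_assoc, hk1]; ext; simp
  · rw [AddMonoidHom.comp_assoc, hk2]; ext; simp
  · rintro k' ⟨rfl, rfl⟩
    rw [← hk3 (d.symm.toAddMonoidHom.comp k') ⟨by ext; simp, by ext; simp⟩]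
    ext; simp


/-- Let `L, M, N` be sharp commutative monoids and `f : N → M`, `g : N → L` local
morphisms, with push-out `P = M ⊔_N L`.  Then `P` is quasi-integral if and only if for
all `m ∈ M`, `l ∈ L`, `n ∈ N^gp`, the equalities `f^gp n = ηM m` and `-(g^gp n) = ηL l`
imply `m = 0` and `l = 0`. -/
theorem stmt6 {N M L P Ngp Mgp Lgp Pgp : Type*}
    [AddCommMonoid N] [AddCommMonoid M] [AddCommMonoid L] [AddCommMonoid P]
    [AddCommGroup Ngp] [AddCommGroup Mgp] [AddCommGroup Lgp] [AddCommGroup Pgp]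
    (hNs : IsSharp N) (hMs : IsSharp M) (hLs : IsSharp L)
    (f : N →+ M) (g : N →+ L) (hf : IsLocalMonoidHom f) (hg : IsLocalMonoidHom g)
    (iM : M →+ P) (iL : L →+ P) (hpo : IsMonPushout f g iM iL)
    (ηN : N →+ Ngp) (hgpN : IsGroupification ηN)
    (ηM : M →+ Mgp) (hgpM : IsGroupification ηM)
    (ηL : L →+ Lgp) (hgpL : IsGroupification ηL)
    (ηP : P →+ Pgp) (hgpP : IsGroupification ηP)
    (F : Ngp →+ Mgp) (hF : F.comp ηN = ηM.comp f)
    (G' : Ngp →+ Lgp) (hG : G'.comp ηN = ηL.comp g) :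
    (∀ p : P, ηP p = 0 → p = 0) ↔
      ∀ (m : M) (l : L) (n : Ngp), F n = ηM m → -(G' n) = ηL l → m = 0 ∧ l = 0 := by
  have hloc : ∀ n, f n = 0 ↔ n = 0 := fun n =>
    ⟨fun h => hNs n (hf n (by rw [h]; exact isAddUnit_zero)), fun h => by rw [h, map_zero]⟩
  have hlog : ∀ n, g n = 0 ↔ n = 0 := fun n =>
    ⟨fun h => hNs n (hg n (by rw [h]; exact isAddUnit_zero)), fun h => by rw [h, map_zero]⟩
  have hMs' : ∀ a b : M, a + b = 0 → a = 0 := fun a b h => hMs a (.of_add_eq_zero b h)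
  have hLs' : ∀ a b : L, a + b = 0 → a = 0 := fun a b h => hLs a (.of_add_eq_zero b h)
  have hcomm : ∀ n, iM (f n) = iL (g n) := fun n => DFunLike.congr_fun hpo.1 n
  have hF' : ∀ n, F (ηN n) = ηM (f n) := fun n => DFunLike.congr_fun hF n
  have hG' : ∀ n, G' (ηN n) = ηL (g n) := fun n => DFunLike.congr_fun hG n
  constructor
  · intro hq m l n h1 h2
    have h3 : iM m + iL l = 0 := by
      apply hq
      obtain ⟨a, b, rfl⟩ := hgpN.1 n
      have h4 : ηM (f a) = ηM (m + f b) := by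
        rw [map_add, ← h1, map_sub, hF', hF']; abel
      have h5 : ηL (g b) = ηL (l + g a) := by
        rw [map_add, ← h2, map_sub, hG', hG']; abel
      obtain ⟨x, hx⟩ := (hgpM.2 _ _).1 h4
      obtain ⟨y, hy⟩ := (hgpL.2 _ _).1 h5
      have h6 := congrArg (fun t => ηP (iM t)) hx
      have h7 := congrArg (fun t => ηP (iL t)) hy
      simp only [map_add, hcomm] at h6 h7 ⊢
      have h8 : ηP (iL (g a)) = ηP (iM m) + ηP (iL (g b)) := add_right_cancel h6
      have h9 : ηP (iL (g b)) = ηP (iL l) + ηP (iL (g a)) := add_right_cancel h7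
      rw [h8] at h9
      have h10 : ηP (iL (g b)) + (ηP (iM m) + ηP (iL l)) = ηP (iL (g b)) + 0 := by
        rw [add_zero]; conv_rhs => rw [h9]
        abel
      exact add_left_cancel h10
    have hbM : ∀ x y : M, x + y ∈ (⊥ : AddSubmonoid M) → x ∈ (⊥ : AddSubmonoid M) :=
      fun x y h => AddSubmonoid.mem_bot.2 (hMs' x y (AddSubmonoid.mem_bot.1 h))
    have hbL : ∀ x y : L, x + y ∈ (⊥ : AddSubmonoid L) → x ∈ (⊥ : AddSubmonoid L) :=
      fun x y h => AddSubmonoid.mem_bot.2 (hLs' x y (AddSubmonoid.mem_bot.1 h))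
    obtain ⟨k, ⟨hk1, hk2⟩, -⟩ := s6_unlift hpo (WithTop ℤ)
      (s6toTop ⊥ hbM (fun _ => (0 : ℤ)) rfl (by simp))
      (s6toTop ⊥ hbL (fun _ => (0 : ℤ)) rfl (by simp)) (by
        ext n : 1
        simp only [AddMonoidHom.comp_apply]
        by_cases hn : n = 0
        · subst hn; simp only [map_zero]
        · rw [s6toTop_not hbM _ _ (by rwa [AddSubmonoid.mem_bot, hloc]),
            s6toTop_not hbL _ _ (by rwa [AddSubmonoid.mem_bot, hlog])])
    have h4 := congrArg k h3
    rw [map_add, map_zero, ← AddMonoidHom.comp_apply, ← AddMonoidHom.comp_apply, hk1, hk2] at h4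
    constructor
    · by_contra hm
      rw [s6toTop_not hbM _ _ (by rwa [AddSubmonoid.mem_bot])] at h4
      simp at h4
    · by_contra hl
      rw [s6toTop_not hbL _ _ (by rwa [AddSubmonoid.mem_bot])] at h4
      simp at h4
  · intro hc
    refine s6_core (iM.coprod iL) ηP ?_ ?_ ?_ ?_
    · intro Q _ h1 h2 h
      have e1 : h1.comp iM = h2.comp iM := by
        ext m; simpa using h (m, 0)
      have e2 : h1.comp iL = h2.comp iL := by
        ext l; simpa using h (0, l)
      exact (s6_unlift hpo Q (h2.comp iM) (h2.comp iL)
        (by rw [AddMonoidHom.comp_assoc, hpo.1, AddMonoidHom.comp_assoc])).unique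
        ⟨e1, e2⟩ ⟨rfl, rfl⟩
    · intro Q _ σ hσ
      obtain ⟨k, ⟨hk1, hk2⟩, -⟩ := s6_unlift hpo Q (σ.comp (AddMonoidHom.inl M L))
        (σ.comp (AddMonoidHom.inr M L)) (by
          ext n
          simp only [AddMonoidHom.comp_apply, AddMonoidHom.inl_apply, AddMonoidHom.inr_apply]
          apply hσ
          simp [hcomm])
      refine ⟨k, ?_⟩
      rintro ⟨m, l⟩
      rw [AddMonoidHom.coprod_apply, map_add]
      change k.comp iM m + k.comp iL l = _
      rw [hk1, hk2]
      simp [← map_add]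
    · rintro ⟨m, l⟩ hz
      let B : AddSubgroup (Mgp × Lgp) := (F.prod (-G')).range
      have hmem : (ηM m, ηL l) ∈ B := by
        by_contra hnot
        have hne : (QuotientAddGroup.mk (ηM m, ηL l) : (Mgp × Lgp) ⧸ B) ≠ 0 := by
          rwa [Ne, QuotientAddGroup.eq_zero_iff]
        obtain ⟨c, hcne⟩ := CharacterModule.exists_character_apply_ne_zero_of_ne_zero hne
        let c1 : (Mgp × Lgp) ⧸ B →+ AddCircle (1 : ℚ) := c
        let q : Mgp × Lgp →+ AddCircle (1 : ℚ) := c1.comp (QuotientAddGroup.mk' B)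
        have hq : ∀ n, q (F n, -G' n) = 0 := by
          intro n
          have : (QuotientAddGroup.mk' B) (F n, -G' n) = 0 :=
            (QuotientAddGroup.eq_zero_iff _).2 ⟨n, rfl⟩
          simp only [q, AddMonoidHom.comp_apply, this, map_zero]
        obtain ⟨k, ⟨hk1, hk2⟩, -⟩ := s6_unlift hpo (AddCircle (1 : ℚ))
          ((q.comp (AddMonoidHom.inl Mgp Lgp)).comp ηM)
          ((q.comp (AddMonoidHom.inr Mgp Lgp)).comp ηL) (by
            ext n
            simp only [AddMonoidHom.comp_apply, AddMonoidHom.inl_apply, AddMonoidHom.inr_apply]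
            have := hq (ηN n)
            rw [hF', hG'] at this
            rw [← sub_eq_zero, ← map_sub]
            simpa using this)
        rw [AddMonoidHom.coprod_apply, ← map_zero ηP] at hz
        obtain ⟨t, ht⟩ := (hgpP.2 _ _).1 hz
        have h1 := congrArg k ht
        rw [map_add, map_add k 0, map_zero] at h1
        have h2 := add_right_cancel h1
        rw [map_add] at h2
        change k.comp iM m + k.comp iL l = 0 at h2
        rw [hk1, hk2] at h2
        apply hcne
        change q (ηM m, ηL l) = 0
        rw [← h2]
        simp only [AddMonoidHom.comp_apply, ← map_add]
        simp
      obtain ⟨n, hn⟩ := hmem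
      rw [Prod.ext_iff] at hn
      obtain ⟨rfl, rfl⟩ := hc m l n hn.1 hn.2
      rfl
    · rintro ⟨a, b⟩ ⟨a', b'⟩ h
      rw [Prod.ext_iff] at h
      exact Prod.ext (hMs' _ _ h.1) (hLs' _ _ h.2)
end

section
/- Let L, M, N be sharp commutative monoids and f : N → M, g : N → L local morphisms of monoids. Then the push-out M ⊔_N L is quasi-integral if and only if M and L are quasi-integral and, for every n ∈ N^gp, the conditions f^gp(n) ∈ M^int and -g^gp(n) ∈ L^int imply f^gp(n) = 0 and g^gp(n) = 0. -/
theorem gg_isGroupification (M : Type*) [AddCommMonoid M] :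
    (∀ x : Algebra.GrothendieckAddGroup M, ∃ a b : M, x = Algebra.GrothendieckAddGroup.of a - Algebra.GrothendieckAddGroup.of b) ∧
  (∀ a b : M, (Algebra.GrothendieckAddGroup.of a : Algebra.GrothendieckAddGroup M) = Algebra.GrothendieckAddGroup.of b ↔ ∃ k : M, a + k = b + k) := by
  constructor
  · intro x
    obtain ⟨⟨a, b⟩, h⟩ := (AddLocalization.addMonoidOf (⊤ : AddSubmonoid M)).surj x
    exact ⟨a, b, eq_sub_of_add_eq h⟩
  · intro a b
    have := (AddLocalization.addMonoidOf (⊤ : AddSubmonoid M)).eq_iff_exists (x := a) (y := b)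
    refine this.trans ?_
    constructor
    · rintro ⟨c, hc⟩
      exact ⟨c, by rw [add_comm a, add_comm b]; exact hc⟩
    · rintro ⟨c, hc⟩
      exact ⟨⟨c, trivial⟩, by simpa [add_comm] using hc⟩

/-- hom to `WithTop Q` that is `φ` on a face and `⊤` outside. -/
noncomputable def extTop {P Q : Type*} [AddCommMonoid P] [AddCommMonoid Q] (F : AddSubmonoid P)
    (hF : ∀ x y, x + y ∈ F → x ∈ F) (φ : F →+ Q) : P →+ WithTop Q where
  toFun x := by
    classical exact if h : x ∈ F then ((φ ⟨x, h⟩ : Q) : WithTop Q) else ⊤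
  map_zero' := by
    rw [dif_pos F.zero_mem, ← WithTop.coe_zero]
    exact congrArg _ φ.map_zero
  map_add' x y := by
    by_cases hx : x ∈ F
    · by_cases hy : y ∈ F
      · rw [dif_pos hx, dif_pos hy, dif_pos (F.add_mem hx hy), ← WithTop.coe_add, ← φ.map_add]
        rfl
      · have : x + y ∉ F := fun h => hy (hF y x (by rwa [add_comm]))
        rw [dif_neg hy, dif_neg this, WithTop.add_top]
    · have : x + y ∉ F := fun h => hx (hF x y h)
      rw [dif_neg hx, dif_neg this, WithTop.top_add]

theorem extTop_pos {P Q : Type*} [AddCommMonoid P] [AddCommMonoid Q] (F : AddSubmonoid P)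
    (hF : ∀ x y, x + y ∈ F → x ∈ F) (φ : F →+ Q) (x : P) (h : x ∈ F) :
    extTop F hF φ x = ((φ ⟨x, h⟩ : Q) : WithTop Q) := dif_pos h

theorem extTop_neg {P Q : Type*} [AddCommMonoid P] [AddCommMonoid Q] (F : AddSubmonoid P)
    (hF : ∀ x y, x + y ∈ F → x ∈ F) (φ : F →+ Q) (x : P) (h : x ∉ F) :
    extTop F hF φ x = ⊤ := dif_neg h

theorem exists_state {W : Type*} [AddCommGroup W] (C : AddSubmonoid W) (u : W) (hu : u ∈ C)
    (hunit : ∀ x : W, ∃ n : ℕ, n • u - x ∈ C) (hneg : -u ∉ C) :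
    ∃ φ : W →+ ℝ, (∀ c ∈ C, 0 ≤ φ c) ∧ 0 < φ u := by
  classical
  obtain ⟨D, hCD, hD⟩ := zorn_le_nonempty₀ {D : AddSubmonoid W | -u ∉ D} (by
    intro c hc hchain y hy
    refine ⟨sSup c, ?_, fun z hz => le_sSup hz⟩
    intro h
    rw [AddSubmonoid.mem_sSup_of_directedOn ⟨y, hy⟩ hchain.directedOn] at h
    obtain ⟨s, hs, h⟩ := h
    exact hc hs h) C hneg
  have hnD : -u ∉ D := hD.prop
  have huD : u ∈ D := hCD hu
  -- maximality
  have key : ∀ x, x ∉ D → ∃ d ∈ D, ∃ n : ℕ, -u = d + n • x := by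
    intro x hx
    by_contra hcon
    push Not at hcon
    have hle : D ≤ D ⊔ AddSubmonoid.multiples x := le_sup_left
    have := hD.le_of_ge (y := D ⊔ AddSubmonoid.multiples x) (by
      intro h
      obtain ⟨d, hd, z, hz, h⟩ := AddSubmonoid.mem_sup.1 h
      obtain ⟨n, rfl⟩ := hz
      exact hcon d hd n (by simpa using h.symm)) hle
    exact hx (this (AddSubmonoid.mem_sup_right (AddSubmonoid.mem_multiples x)))
  have total : ∀ x, x ∈ D ∨ -x ∈ D := by
    intro x
    by_contra hcon
    push Not at hcon
    obtain ⟨d, hd, n, h1⟩ := key x hcon.1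
    obtain ⟨e, he, m, h2⟩ := key (-x) hcon.2
    have hn : n ≠ 0 := by
      rintro rfl
      apply hnD; rw [h1]; simpa using hd
    obtain ⟨n, rfl⟩ := Nat.exists_eq_succ_of_ne_zero hn
    apply hnD
    have : -u = m • d + (n+1) • e + (m + n) • u := by
      have h3 : d = -u - (n+1) • x := by rw [h1]; abel
      have h4 : e = -u - m • (-x) := by rw [h2]; abel
      rw [h3, h4]
      module
    rw [this]
    exact D.add_mem (D.add_mem (D.nsmul_mem hd _) (D.nsmul_mem he _)) (D.nsmul_mem huD _)
  let K : AddSubgroup W :=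
    { carrier := {x | x ∈ D ∧ -x ∈ D}
      zero_mem' := by simp
      add_mem' := by
        rintro a b ⟨h1, h2⟩ ⟨h3, h4⟩
        exact ⟨D.add_mem h1 h3, by rw [neg_add]; exact D.add_mem h2 h4⟩
      neg_mem' := by
        rintro a ⟨h1, h2⟩
        exact ⟨h2, by simpa using h1⟩ }
  let π := QuotientAddGroup.mk' K
  have hπ : ∀ x, π x ∈ D.map π ↔ x ∈ D := by
    intro x
    constructor
    · rintro ⟨y, hy, hxy⟩
      have : -y + x ∈ K := QuotientAddGroup.eq.1 hxy
      have := D.add_mem hy this.1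
      simpa using this
    · intro h; exact ⟨x, h, rfl⟩
  let cone : AddGroupCone (W ⧸ K) :=
    { D.map π with
      eq_zero_of_mem_of_neg_mem' := by
        intro a ha hb
        obtain ⟨x, rfl⟩ := QuotientAddGroup.mk'_surjective K a
        have h1 := (hπ x).1 ha
        have h2 := (hπ (-x)).1 (by rw [map_neg]; exact hb)
        exact (QuotientAddGroup.eq_zero_iff x).2 ⟨h1, h2⟩ }
  have hmem : ∀ x, π x ∈ cone ↔ x ∈ D := hπ
  have : HasMemOrNegMem cone := ⟨by
    intro a
    obtain ⟨x, rfl⟩ := QuotientAddGroup.mk'_surjective K a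
    rcases total x with h | h
    · exact Or.inl ((hmem x).2 h)
    · right
      rw [← map_neg]
      exact (hmem _).2 h⟩
  let : LinearOrder (W ⧸ K) := LinearOrder.mkOfAddGroupCone cone
  have : IsOrderedAddMonoid (W ⧸ K) := IsOrderedAddMonoid.mkOfCone cone
  have hle : ∀ x y, π x ≤ π y ↔ y - x ∈ D := by
    intro x y
    rw [← hmem, map_sub]
    rfl
  have : Archimedean (W ⧸ K) := ⟨by
    intro a b hb
    obtain ⟨x, rfl⟩ := QuotientAddGroup.mk'_surjective K a
    obtain ⟨y, rfl⟩ := QuotientAddGroup.mk'_surjective K b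
    have hy : -y ∉ D := by
      intro h
      apply not_le_of_gt hb
      have := (hle y 0).2 (by simpa using h)
      rw [map_zero] at this
      exact this
    obtain ⟨d, hd, n, h1⟩ := key _ hy
    obtain ⟨m, hm⟩ := hunit x
    refine ⟨m * n, ?_⟩
    change π x ≤ (m * n) • π y
    rw [← map_nsmul, hle]
    have : (m * n) • y - x = (m • u - x) + m • d := by
      have : d = -u - n • (-y) := by rw [h1]; abel
      rw [this]; module
    rw [this]
    exact D.add_mem (hCD hm) (D.nsmul_mem hd _)⟩
  obtain ⟨ψ, hψ⟩ := Archimedean.exists_orderAddMonoidHom_real_injective (W ⧸ K)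
  refine ⟨ψ.toAddMonoidHom.comp π, ?_, ?_⟩
  · intro c hc
    have : π 0 ≤ π c := (hle 0 c).2 (by simpa using hCD hc)
    have := ψ.monotone' this
    simpa using this
  · have h0 : π 0 < π u := by
      refine lt_of_le_not_ge ((hle 0 u).2 (by simpa using huD)) ?_
      rw [hle]; simpa using hnD
    have := (ψ.monotone'.strictMono_of_injective hψ) h0
    simpa using this

open Algebra.GrothendieckAddGroup in
theorem core_lemma {P : Type*} [AddCommMonoid P] (S : AddSubmonoid P)
    (hE : ∀ (Q : Type) [AddCommMonoid Q] (j : S →+ Q), ∃ h : P →+ Q, ∀ x : S, h x = j x)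
    (hU : ∀ (Q : Type) [AddCommMonoid Q] (h1 h2 : P →+ Q), (∀ x ∈ S, h1 x = h2 x) → h1 = h2)
    (hS : ∀ x ∈ S, ∀ k, x + k = k → x = 0)
    (hsharp : ∀ x ∈ S, ∀ y, x + y = 0 → x = 0) (p k : P) (hp : p + k = k) : p = 0 := by
  classical
  have hnk : ∀ n : ℕ, n • p + k = k := by
    intro n
    induction n with
    | zero => simp
    | succ n ih => rw [succ_nsmul, add_assoc, hp, ih]
  -- the face generated by `p`
  let F : AddSubmonoid P :=
    { carrier := {x | ∃ (n : ℕ) (y : P), x + y = n • p}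
      zero_mem' := ⟨0, 0, by simp⟩
      add_mem' := by
        rintro a b ⟨n, y, h⟩ ⟨m, z, h'⟩
        exact ⟨n + m, y + z, by rw [add_nsmul, ← h, ← h']; abel⟩ }
  have hF : ∀ x y, x + y ∈ F → x ∈ F := by
    rintro x y ⟨n, z, h⟩
    exact ⟨n, y + z, by rw [← h]; abel⟩
  have hF' : ∀ x y, x + y ∈ F → y ∈ F := fun x y h => hF y x (by rwa [add_comm])
  have hpF : p ∈ F := ⟨1, 0, by simp⟩
  -- the face generated by `S ∩ F`
  let G : AddSubmonoid P :=
    { carrier := {x | ∃ y u, u ∈ S ∧ u ∈ F ∧ x + y = u}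
      zero_mem' := ⟨0, 0, S.zero_mem, F.zero_mem, by simp⟩
      add_mem' := by
        rintro a b ⟨y, u, hu, hu', h⟩ ⟨z, v, hv, hv', h'⟩
        exact ⟨y + z, u + v, S.add_mem hu hv, F.add_mem hu' hv', by rw [← h, ← h']; abel⟩ }
  have hG : ∀ x y, x + y ∈ G → x ∈ G := by
    rintro x y ⟨z, u, hu, hu', h⟩
    exact ⟨y + z, u, hu, hu', by rw [← h]; abel⟩
  have hpG : p ∈ G := by
    have := hU (WithTop ℕ) (extTop F hF 0) (extTop G hG 0) (by
      intro x hx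
      by_cases h : x ∈ F
      · have h' : x ∈ G := ⟨0, x, hx, h, by simp⟩
        rw [extTop_pos _ _ _ _ h, extTop_pos _ _ _ _ h']
        rfl
      · have h' : x ∉ G := by
          rintro ⟨y, u, hu, hu', h'⟩
          exact h (hF x y (h' ▸ hu'))
        rw [extTop_neg _ _ _ _ h, extTop_neg _ _ _ _ h'])
    by_contra h
    have h2 := DFunLike.congr_fun this p
    rw [extTop_pos _ _ _ _ hpF, extTop_neg _ _ _ _ h] at h2
    exact WithTop.coe_ne_top h2
  obtain ⟨q, u, huS, huF, hpq⟩ := hpG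
  -- the group
  let ι : F →+ Algebra.GrothendieckAddGroup F := of
  obtain ⟨hι1, hι2⟩ := gg_isGroupification F
  change ∀ x, ∃ a b, x = ι a - ι b at hι1
  change ∀ a b, ι a = ι b ↔ _ at hι2
  -- `S ∩ F` generates the group
  let SF : AddSubmonoid F := S.comap F.subtype
  have hgen : ∀ w : Algebra.GrothendieckAddGroup F, ∃ a ∈ SF, ∃ b ∈ SF, w = ι a - ι b := by
    let B : AddSubgroup (Algebra.GrothendieckAddGroup F) :=
      { carrier := {w | ∃ a ∈ SF, ∃ b ∈ SF, w = ι a - ι b}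
        zero_mem' := ⟨0, SF.zero_mem, 0, SF.zero_mem, by simp⟩
        add_mem' := by
          rintro _ _ ⟨a, ha, b, hb, rfl⟩ ⟨c, hc, d, hd, rfl⟩
          exact ⟨a + c, SF.add_mem ha hc, b + d, SF.add_mem hb hd, by
            rw [map_add, map_add]; abel⟩
        neg_mem' := by
          rintro _ ⟨a, ha, b, hb, rfl⟩
          exact ⟨b, hb, a, ha, by abel⟩ }
    intro w
    change w ∈ B
    by_contra hw
    have hne : QuotientAddGroup.mk' B w ≠ 0 := fun h => hw ((QuotientAddGroup.eq_zero_iff w).1 h)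
    obtain ⟨χ, hχ⟩ := CharacterModule.exists_character_apply_ne_zero_of_ne_zero hne
    let χ' : (Algebra.GrothendieckAddGroup F ⧸ B) →+ AddCircle (1 : ℚ) := χ
    let ψ : F →+ AddCircle (1 : ℚ) := (χ'.comp (QuotientAddGroup.mk' B)).comp ι
    have hψ := hU (WithTop (AddCircle (1 : ℚ))) (extTop F hF ψ) (extTop F hF 0) (by
      intro x hx
      by_cases h : x ∈ F
      · rw [extTop_pos _ _ _ _ h, extTop_pos _ _ _ _ h]
        congr 1
        have : ι ⟨x, h⟩ ∈ B := ⟨⟨x, h⟩, hx, 0, SF.zero_mem, by simp⟩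
        have : QuotientAddGroup.mk' B (ι ⟨x, h⟩) = 0 := (QuotientAddGroup.eq_zero_iff _).2 this
        change χ' (QuotientAddGroup.mk' B (ι ⟨x, h⟩)) = 0
        rw [this, map_zero]
      · rw [extTop_neg _ _ _ _ h, extTop_neg _ _ _ _ h])
    have hψ0 : ∀ x : F, ψ x = 0 := by
      intro x
      have h2 := DFunLike.congr_fun hψ x.1
      rw [extTop_pos _ _ _ _ x.2, extTop_pos _ _ _ _ x.2] at h2
      exact WithTop.coe_injective h2
    apply hχ
    obtain ⟨a, b, rfl⟩ := hι1 w
    change χ' (QuotientAddGroup.mk' B (ι a - ι b)) = 0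
    rw [map_sub, map_sub]
    change ψ a - ψ b = 0
    rw [hψ0, hψ0, sub_zero]
  by_cases hu0 : u = 0
  · -- unit case
    subst hu0
    have hSF : ∀ a ∈ SF, a = 0 := by
      rintro ⟨a, n, y, h⟩ ha
      apply Subtype.ext
      refine hsharp a ha (y + n • q) ?_
      rw [← add_assoc, h, ← nsmul_add, hpq, nsmul_zero]
    have hp0 : ι ⟨p, hpF⟩ = ι 0 := by
      obtain ⟨a, ha, b, hb, h⟩ := hgen (ι ⟨p, hpF⟩)
      rw [h, hSF a ha, hSF b hb, sub_self, map_zero]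
    obtain ⟨⟨c, n, y, hc⟩, h⟩ := (hι2 _ _).1 hp0
    have h : p + c = 0 + c := congrArg Subtype.val h
    have hinv : c + (y + n • q) = 0 := by
      rw [← add_assoc, hc, ← nsmul_add, hpq, nsmul_zero]
    calc p = p + (c + (y + n • q)) := by rw [hinv, add_zero]
      _ = (p + c) + (y + n • q) := by rw [add_assoc]
      _ = c + (y + n • q) := by rw [h, zero_add]
      _ = 0 := hinv
  · exfalso
    -- `u` is an order unit of `S ∩ F`
    let H : AddSubmonoid S :=
      { carrier := {x | ∃ y ∈ S, ∃ n : ℕ, (x : P) + y = n • u}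
        zero_mem' := ⟨0, S.zero_mem, 0, by simp⟩
        add_mem' := by
          rintro a b ⟨y, hy, n, h⟩ ⟨z, hz, m, h'⟩
          exact ⟨y + z, S.add_mem hy hz, n + m, by
            rw [add_nsmul, ← h, ← h', AddSubmonoid.coe_add]; abel⟩ }
    have hH : ∀ x y, x + y ∈ H → x ∈ H := by
      rintro x y ⟨z, hz, n, h⟩
      exact ⟨y + z, S.add_mem y.2 hz, n, by rw [← h, AddSubmonoid.coe_add]; abel⟩
    have hord : ∀ a ∈ SF, ∃ y ∈ SF, ∃ n : ℕ, a + y = n • (⟨u, huF⟩ : F) := by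
      rintro ⟨a, haF⟩ ha
      obtain ⟨h, hh⟩ := hE (WithTop ℕ) (extTop H hH 0)
      have huH : (⟨u, huS⟩ : S) ∈ H := ⟨0, S.zero_mem, 1, by simp⟩
      have h1 : h u = 0 := by
        have := hh ⟨u, huS⟩
        rw [extTop_pos _ _ _ _ huH] at this
        exact this
      have h2 : h p = 0 := by
        have := h.map_add p q
        rw [hpq, h1] at this
        exact (add_eq_zero.1 this.symm).1
      obtain ⟨n, y, hy⟩ := id haF
      have h3 : h a = 0 := by
        have := h.map_add a y
        rw [hy, map_nsmul, h2, nsmul_zero] at this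
        exact (add_eq_zero.1 this.symm).1
      have haH : (⟨a, ha⟩ : S) ∈ H := by
        by_contra hcon
        have := hh ⟨a, ha⟩
        rw [extTop_neg _ _ _ _ hcon] at this
        change h a = ⊤ at this
        rw [h3] at this
        exact WithTop.zero_ne_top this
      obtain ⟨z, hz, m, hm⟩ := haH
      change a + z = m • u at hm
      have hzF : z ∈ F := hF' a z (by rw [hm]; exact F.nsmul_mem huF m)
      exact ⟨⟨z, hzF⟩, hz, m, Subtype.ext hm⟩
    let uF : F := ⟨u, huF⟩
    let pF : F := ⟨p, hpF⟩
    have huSF : uF ∈ SF := huS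
    let C : AddSubmonoid (Algebra.GrothendieckAddGroup F) :=
      { carrier := {w | ∃ x ∈ SF, ∃ n : ℕ, w = ι x - n • ι pF}
        zero_mem' := ⟨0, SF.zero_mem, 0, by simp⟩
        add_mem' := by
          rintro _ _ ⟨a, ha, n, rfl⟩ ⟨b, hb, m, rfl⟩
          exact ⟨a + b, SF.add_mem ha hb, n + m, by rw [map_add, add_nsmul]; abel⟩ }
    obtain ⟨φ, hφC, hφu⟩ := exists_state C (ι uF) ⟨uF, huSF, 0, by simp⟩ (by
      intro w
      obtain ⟨a, ha, b, hb, rfl⟩ := hgen w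
      obtain ⟨y, hy, n, h⟩ := hord a ha
      refine ⟨n, b + y, SF.add_mem hb hy, 0, ?_⟩
      have : n • ι uF = ι a + ι y := by rw [← map_nsmul, ← map_add, h]
      rw [this, map_add, zero_nsmul]
      abel) (by
      rintro ⟨x, hx, n, h⟩
      have h1 : ι (x + uF) = ι (n • pF) := by
        rw [map_add, map_nsmul]
        rw [eq_sub_iff_add_eq] at h
        rw [← h]
        abel
      obtain ⟨c, hc⟩ := (hι2 _ _).1 h1
      have hc : x.1 + u + c.1 = n • p + c.1 := congrArg Subtype.val hc
      have h2 : x.1 + u = 0 := by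
        refine hS _ (S.add_mem hx huS) (c.1 + k) ?_
        rw [← add_assoc, hc, add_right_comm, hnk, add_comm]
      exact hu0 (hsharp u huS x.1 (by rw [add_comm]; exact h2)))
    let h0 : P →+ WithTop ℝ := extTop F hF (φ.comp ι)
    have hpos : ∀ x ∈ S, 0 ≤ h0 x := by
      intro x hx
      by_cases h : x ∈ F
      · have e : h0 x = ((φ (ι ⟨x, h⟩) : ℝ) : WithTop ℝ) := extTop_pos _ _ _ _ h
        rw [e]
        have : 0 ≤ φ (ι ⟨x, h⟩) := hφC _ ⟨⟨x, h⟩, hx, 0, by simp⟩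
        exact_mod_cast this
      · have e : h0 x = ⊤ := extTop_neg _ _ _ _ h
        rw [e]; exact le_top
    let j : S →+ AddSubmonoid.nonneg (WithTop ℝ) :=
      (h0.comp S.subtype).codRestrict _ (fun x => hpos x.1 x.2)
    obtain ⟨h, hh⟩ := hE _ j
    have heq : (AddSubmonoid.subtype _).comp h = h0 := hU _ _ _ (by
      intro x hx
      have := hh ⟨x, hx⟩
      exact congrArg Subtype.val this)
    have hpos' : ∀ x : F, 0 ≤ φ (ι x) := by
      intro x
      have h1 : 0 ≤ h0 x.1 := by
        rw [← heq]; exact (h x.1).2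
      have e : h0 x.1 = ((φ (ι x) : ℝ) : WithTop ℝ) := extTop_pos _ _ _ _ x.2
      rw [e] at h1
      exact_mod_cast h1
    have hφp : φ (ι pF) ≤ 0 := by
      have := hφC (-ι pF) ⟨0, SF.zero_mem, 1, by simp⟩
      rw [map_neg] at this
      linarith
    obtain ⟨n, y, hy⟩ := id huF
    have hyF : y ∈ F := hF' u y (by rw [hy]; exact F.nsmul_mem hpF n)
    have e1 : uF + ⟨y, hyF⟩ = n • pF := Subtype.ext hy
    have e2 : φ (ι uF) + φ (ι ⟨y, hyF⟩) = n • φ (ι pF) := by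
      rw [← map_add, ← map_add, e1, map_nsmul, map_nsmul]
    have e3 := hpos' ⟨y, hyF⟩
    have e4 : n • φ (ι pF) ≤ 0 := nsmul_nonpos hφp n
    linarith

/-- Let `L, M, N` be sharp commutative monoids and `f : N → M`, `g : N → L` local
morphisms, with push-out `P = M ⊔_N L`.  Then `P` is quasi-integral if and only if `M`
and `L` are quasi-integral and, for every `n ∈ N^gp`, the conditions `f^gp n ∈ M^int`
and `-(g^gp n) ∈ L^int` imply `f^gp n = 0` and `g^gp n = 0`. -/
theorem stmt7 {N M L P Ngp Mgp Lgp Pgp : Type*}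
    [AddCommMonoid N] [AddCommMonoid M] [AddCommMonoid L] [AddCommMonoid P]
    [AddCommGroup Ngp] [AddCommGroup Mgp] [AddCommGroup Lgp] [AddCommGroup Pgp]
    (hNs : IsSharp N) (hMs : IsSharp M) (hLs : IsSharp L)
    (f : N →+ M) (g : N →+ L) (hf : IsLocalMonoidHom f) (hg : IsLocalMonoidHom g)
    (iM : M →+ P) (iL : L →+ P) (hpo : IsMonPushout f g iM iL)
    (ηN : N →+ Ngp) (hgpN : IsGroupification ηN)
    (ηM : M →+ Mgp) (hgpM : IsGroupification ηM)
    (ηL : L →+ Lgp) (hgpL : IsGroupification ηL)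
    (ηP : P →+ Pgp) (hgpP : IsGroupification ηP)
    (F : Ngp →+ Mgp) (hF : F.comp ηN = ηM.comp f)
    (G' : Ngp →+ Lgp) (hG : G'.comp ηN = ηL.comp g) :
    (∀ p : P, ηP p = 0 → p = 0) ↔
      ((∀ m : M, ηM m = 0 → m = 0) ∧ (∀ l : L, ηL l = 0 → l = 0) ∧
        ∀ n : Ngp, F n ∈ AddMonoidHom.mrange ηM → -(G' n) ∈ AddMonoidHom.mrange ηL →
          F n = 0 ∧ G' n = 0) := by
  classical
  obtain ⟨hcomm, huniv⟩ := hpo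
  have hcomm' : ∀ n, iM (f n) = iL (g n) := fun n => DFunLike.congr_fun hcomm n
  -- existence and uniqueness for targets in `Type`
  have hE1 : ∀ (Q : Type) [AddCommMonoid Q] (jM : M →+ Q) (jL : L →+ Q),
      (∀ n, jM (f n) = jL (g n)) →
      ∃ h : P →+ Q, (∀ m, h (iM m) = jM m) ∧ (∀ l, h (iL l) = jL l) := by
    intro Q _ jM jL hj
    let e : Q ≃+ ULift Q := AddEquiv.ulift.symm
    obtain ⟨h, ⟨h1, h2⟩, -⟩ := huniv (ULift Q) (e.toAddMonoidHom.comp jM)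
      (e.toAddMonoidHom.comp jL) (by
        refine AddMonoidHom.ext fun n => ?_
        exact congrArg e (hj n))
    refine ⟨e.symm.toAddMonoidHom.comp h, fun m => ?_, fun l => ?_⟩
    · have := DFunLike.congr_fun h1 m
      exact e.symm_apply_eq.2 this
    · have := DFunLike.congr_fun h2 l
      exact e.symm_apply_eq.2 this
  have hU1 : ∀ (Q : Type) [AddCommMonoid Q] (h1 h2 : P →+ Q),
      (∀ m, h1 (iM m) = h2 (iM m)) → (∀ l, h1 (iL l) = h2 (iL l)) → h1 = h2 := by
    intro Q _ h1 h2 hM hL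
    let e : Q ≃+ ULift Q := AddEquiv.ulift.symm
    have := (huniv (ULift Q) ((e.toAddMonoidHom.comp h2).comp iM)
      ((e.toAddMonoidHom.comp h2).comp iL) (by
        refine AddMonoidHom.ext fun n => ?_
        exact congrArg (fun x => e (h2 x)) (hcomm' n))).unique
        (y₁ := e.toAddMonoidHom.comp h1) (y₂ := e.toAddMonoidHom.comp h2)
        ⟨AddMonoidHom.ext fun m => congrArg e (hM m), AddMonoidHom.ext fun l => congrArg e (hL l)⟩ ⟨rfl, rfl⟩
    ext x
    exact e.injective (DFunLike.congr_fun this x)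
  have hf0 : ∀ n, f n = 0 → n = 0 := fun n h => hNs n (hf n (by rw [h]; exact isAddUnit_zero))
  have hg0 : ∀ n, g n = 0 → n = 0 := fun n h => hNs n (hg n (by rw [h]; exact isAddUnit_zero))
  have hbotM : ∀ x y : M, x + y ∈ (⊥ : AddSubmonoid M) → x ∈ (⊥ : AddSubmonoid M) :=
    fun x y h => hMs x (IsAddUnit.of_add_eq_zero y h)
  have hbotL : ∀ x y : L, x + y ∈ (⊥ : AddSubmonoid L) → x ∈ (⊥ : AddSubmonoid L) :=
    fun x y h => hLs x (IsAddUnit.of_add_eq_zero y h)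
  -- the images of nonzero elements are not units
  have hK0 : ∀ m l y, iM m + iL l + y = 0 → m = 0 ∧ l = 0 := by
    obtain ⟨h, h1, h2⟩ := hE1 (WithTop ℕ) (extTop ⊥ hbotM 0) (extTop ⊥ hbotL 0) (by
      intro n
      by_cases hn : n = 0
      · subst hn; simp
      · rw [extTop_neg _ _ _ _ (fun h => hn (hf0 n h)),
          extTop_neg _ _ _ _ (fun h => hn (hg0 n h))])
    intro m l y hy
    have h3 := congrArg h hy
    rw [map_add, map_add, map_zero, h1, h2, add_eq_zero, add_eq_zero] at h3
    constructor
    · by_contra hm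
      rw [extTop_neg _ _ _ _ hm] at h3
      exact WithTop.top_ne_zero h3.1.1
    · by_contra hl
      rw [extTop_neg ⊥ hbotL _ _ hl] at h3
      exact WithTop.top_ne_zero h3.1.2
  have hFn : ∀ n, F (ηN n) = ηM (f n) := fun n => DFunLike.congr_fun hF n
  have hGn : ∀ n, G' (ηN n) = ηL (g n) := fun n => DFunLike.congr_fun hG n
  constructor
  · intro hP
    have hPk : ∀ x k : P, x + k = k → x = 0 := by
      intro x k h
      apply hP
      have := congrArg ηP h
      rw [map_add] at this
      simpa using this
    refine ⟨?_, ?_, ?_⟩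
    · intro m hm
      obtain ⟨k, hk⟩ := (hgpM.2 m 0).1 (by rw [hm, map_zero])
      rw [zero_add] at hk
      have := hPk (iM m) (iM k) (by rw [← map_add, hk])
      exact (hK0 m 0 0 (by rw [this]; simp)).1
    · intro l hl
      obtain ⟨k, hk⟩ := (hgpL.2 l 0).1 (by rw [hl, map_zero])
      rw [zero_add] at hk
      have := hPk (iL l) (iL k) (by rw [← map_add, hk])
      exact (hK0 0 l 0 (by rw [this]; simp)).2
    · rintro n ⟨m, hm⟩ ⟨l, hl⟩
      obtain ⟨a, b, rfl⟩ := hgpN.1 n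
      rw [map_sub, hFn, hFn] at hm
      rw [map_sub, hGn, hGn] at hl
      obtain ⟨c, hc⟩ := (hgpM.2 (m + f b) (f a)).1 (by rw [map_add, hm]; abel)
      obtain ⟨d, hd⟩ := (hgpL.2 (l + g a) (g b)).1 (by rw [map_add, hl]; abel)
      have hc' := congrArg iM hc
      have hd' := congrArg iL hd
      simp only [map_add] at hc' hd'
      have h0 := hPk (iM m + iL l) (iM (f b) + iM c + (iL (g a) + iL d)) (by
        calc _ = (iM m + iM (f b) + iM c) + (iL l + iL (g a) + iL d) := by abel
          _ = (iM (f a) + iM c) + (iL (g b) + iL d) := by rw [hc', hd']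
          _ = _ := by rw [hcomm', ← hcomm' b]; abel)
      obtain ⟨h1, h2⟩ := hK0 m l 0 (by rw [h0, add_zero])
      subst h1 h2
      rw [map_sub, map_sub, hFn, hFn, hGn, hGn]
      rw [map_zero] at hm hl
      exact ⟨hm.symm, neg_eq_zero.1 hl.symm⟩
  · rintro ⟨hM, hL, hcond⟩
    -- elements of the image that vanish in the groupification
    have hA : ∀ m l k, iM m + iL l + k = k → m = 0 ∧ l = 0 := by
      intro m l k hk
      let B : AddSubgroup (Mgp × Lgp) := (F.prod (-G')).range
      have hmem : (ηM m, ηL l) ∈ B := by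
        by_contra hw
        have hne : QuotientAddGroup.mk' B (ηM m, ηL l) ≠ 0 :=
          fun h => hw ((QuotientAddGroup.eq_zero_iff _).1 h)
        obtain ⟨χ, hχ⟩ := CharacterModule.exists_character_apply_ne_zero_of_ne_zero hne
        let χ' : ((Mgp × Lgp) ⧸ B) →+ AddCircle (1 : ℚ) := χ
        let ψ : (Mgp × Lgp) →+ AddCircle (1 : ℚ) := χ'.comp (QuotientAddGroup.mk' B)
        have hψB : ∀ n, ψ (F n, -G' n) = 0 := by
          intro n
          have : QuotientAddGroup.mk' B (F n, -G' n) = 0 :=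
            (QuotientAddGroup.eq_zero_iff _).2 ⟨n, rfl⟩
          change χ' (QuotientAddGroup.mk' B (F n, -G' n)) = 0
          rw [this, map_zero]
        obtain ⟨h, h1, h2⟩ := hE1 (AddCircle (1 : ℚ))
          ((ψ.comp (AddMonoidHom.inl _ _)).comp ηM) ((ψ.comp (AddMonoidHom.inr _ _)).comp ηL) (by
            intro n
            change ψ (ηM (f n), 0) = ψ (0, ηL (g n))
            rw [← sub_eq_zero, ← map_sub, ← hFn, ← hGn, ← hψB (ηN n)]
            simp)
        apply hχ
        change ψ (ηM m, ηL l) = 0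
        have h3 := congrArg h hk
        rw [map_add, map_add, h1, h2, add_eq_right] at h3
        rw [← h3]
        change _ = ψ (ηM m, 0) + ψ (0, ηL l)
        rw [← map_add]
        simp
      obtain ⟨n, hn⟩ := hmem
      have hn1 : F n = ηM m := congrArg Prod.fst hn
      have hn2 : -G' n = ηL l := congrArg Prod.snd hn
      obtain ⟨h1, h2⟩ := hcond n ⟨m, hn1.symm⟩ ⟨l, hn2.symm⟩
      exact ⟨hM m (by rw [← hn1, h1]), hL l (by rw [← hn2, h2, neg_zero])⟩
    let s : M × L →+ P := iM.coprod iL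
    have hs : ∀ m l, s (m, l) = iM m + iL l := fun m l => rfl
    have hsM : ∀ m, iM m ∈ AddMonoidHom.mrange s := fun m => ⟨(m, 0), by rw [hs]; simp⟩
    have hsL : ∀ l, iL l ∈ AddMonoidHom.mrange s := fun l => ⟨(0, l), by rw [hs]; simp⟩
    intro p hp
    obtain ⟨k, hk⟩ := (hgpP.2 p 0).1 (by rw [hp, map_zero])
    rw [zero_add] at hk
    refine core_lemma (AddMonoidHom.mrange s) ?_ ?_ ?_ ?_ p k hk
    · intro Q _ j
      obtain ⟨h, h1, h2⟩ := hE1 Q (j.comp (iM.codRestrict _ hsM)) (j.comp (iL.codRestrict _ hsL)) (by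
        intro n
        exact congrArg j (Subtype.ext (hcomm' n)))
      refine ⟨h, ?_⟩
      rintro ⟨_, ⟨m, l⟩, rfl⟩
      change h (iM m + iL l) = _
      rw [map_add, h1, h2]
      change j _ + j _ = _
      rw [← map_add]
      rfl
    · intro Q _ h1 h2 h
      exact hU1 Q h1 h2 (fun m => h _ (hsM m)) (fun l => h _ (hsL l))
    · rintro _ ⟨⟨m, l⟩, rfl⟩ k hk
      obtain ⟨rfl, rfl⟩ := hA m l k hk
      exact s.map_zero
    · rintro _ ⟨⟨m, l⟩, rfl⟩ y hy
      obtain ⟨rfl, rfl⟩ := hK0 m l y hy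
      exact s.map_zero
end

section
/- Let L, M, N be sharp fs monoids and f : N → M, g : N → L local morphisms of monoids. Let P = M ⊔_N L be the push-out in commutative monoids. If P is quasi-integral, then P^int is sharp and fine, P^sat is fs, and the unit group (P^sat)^× is a finite abelian group. -/
theorem h13_bounded_finite {G : Type*} [AddCommGroup G] [AddGroup.FG G] (S : Finset G) :
    Set.Finite {x : G | ∃ a : ℕ, 0 < a ∧ ∃ r : G → ℕ, (∀ i, r i < a) ∧
      a • x = ∑ i ∈ S, r i • i} := by
  classical
  obtain ⟨n, ι, fι, p, hp, e, ⟨φ⟩⟩ := AddCommGroup.equiv_free_prod_directSum_zmod G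
  have : ∀ i, NeZero (p i ^ e i) := fun i => ⟨pow_ne_zero _ (hp i).ne_zero⟩
  have : Finite (DirectSum ι fun i => ZMod (p i ^ e i)) :=
    Finite.of_equiv _ (DirectSum.addEquivProd (fun i => ZMod (p i ^ e i))).symm.toEquiv
  let B : Fin n → ℤ := fun j => ∑ i ∈ S, |(φ i).1 j|
  have hfin : Set.Finite ((Set.pi Set.univ fun j => Set.Icc (-B j) (B j)) ×ˢ
      (Set.univ : Set (DirectSum ι fun i => ZMod (p i ^ e i)))) :=
    (Set.Finite.pi fun j => Set.finite_Icc _ _).prod Set.finite_univ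
  let ψ : G → (Fin n → ℤ) × (DirectSum ι fun i => ZMod (p i ^ e i)) :=
    fun x => (fun j => (φ x).1 j, (φ x).2)
  have hψ : Function.Injective ψ := by
    intro x y hxy
    apply φ.injective
    have h1 := congrArg Prod.fst hxy
    have h2 := congrArg Prod.snd hxy
    refine Prod.ext ?_ h2
    ext j
    exact congrFun h1 j
  refine Set.Finite.subset (hfin.preimage hψ.injOn) ?_
  rintro x ⟨a, ha, r, hr, hx⟩
  refine ⟨?_, trivial⟩
  intro j _
  let c : G →+ ℤ := ((Finsupp.applyAddHom j).comp (AddMonoidHom.fst _ _)).comp φ.toAddMonoidHom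
  have hc : ∀ y, c y = (φ y).1 j := fun _ => rfl
  have h := congrArg c hx
  rw [map_nsmul, map_sum] at h
  simp only [map_nsmul, nsmul_eq_mul] at h
  have hb : |(a : ℤ) * c x| ≤ a * B j := by
    rw [h]
    refine (Finset.abs_sum_le_sum_abs _ _).trans ?_
    simp only [B, Finset.mul_sum]
    refine Finset.sum_le_sum fun i _ => ?_
    rw [abs_mul, hc, Nat.abs_cast]
    exact mul_le_mul_of_nonneg_right (by exact_mod_cast (hr i).le) (abs_nonneg _)
  rw [abs_mul, Nat.abs_cast] at hb
  have := le_of_mul_le_mul_left hb (by exact_mod_cast ha)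
  exact abs_le.mp this

theorem h13_gordan {G : Type*} [AddCommGroup G] [AddGroup.FG G] (T : AddSubmonoid G)
    (hT : T.FG) :
    ∃ S : Finset G, (↑(AddSubmonoid.closure (S : Set G)) : Set G) = saturationOf (T : Set G) := by
  classical
  obtain ⟨S, rfl⟩ := hT
  have hfin := h13_bounded_finite S
  have hmem : ∀ r : G → ℕ, ∑ i ∈ S, r i • i ∈ AddSubmonoid.closure (S : Set G) := fun r =>
    AddSubmonoid.sum_mem _ fun i hi =>
      AddSubmonoid.nsmul_mem _ (AddSubmonoid.subset_closure hi) _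
  refine ⟨hfin.toFinset ∪ S, ?_⟩
  apply Set.Subset.antisymm
  · intro x hx
    induction hx using AddSubmonoid.closure_induction with
    | mem x hx =>
      simp only [Finset.coe_union, Set.Finite.coe_toFinset, Set.mem_union] at hx
      rcases hx with ⟨a, ha, r, hr, h⟩ | hx
      · exact ⟨a, ha, by rw [h]; exact hmem r⟩
      · exact ⟨1, one_pos, by rw [one_nsmul]; exact AddSubmonoid.subset_closure hx⟩
    | zero => exact ⟨1, one_pos, by rw [smul_zero]; exact AddSubmonoid.zero_mem _⟩
    | add x y _ _ hx hy =>
      obtain ⟨a, ha, hx⟩ := hx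
      obtain ⟨b, hb, hy⟩ := hy
      refine ⟨b * a, Nat.mul_pos hb ha, ?_⟩
      rw [smul_add, mul_smul, mul_comm b a, mul_smul]
      exact AddSubmonoid.add_mem _ (AddSubmonoid.nsmul_mem _ hx _)
        (AddSubmonoid.nsmul_mem _ hy _)
  · rintro x ⟨a, ha, hx⟩
    obtain ⟨r, -, hr⟩ := AddSubmonoid.mem_closure_finset.mp hx
    have e : x = (x - ∑ i ∈ S, (r i / a) • i) + ∑ i ∈ S, (r i / a) • i := by abel
    rw [e]
    refine AddSubmonoid.add_mem _ (AddSubmonoid.subset_closure ?_)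
      (AddSubmonoid.closure_mono (by simp) (hmem _))
    simp only [Finset.coe_union, Set.Finite.coe_toFinset]
    left
    refine ⟨a, ha, fun i => r i % a, fun i => Nat.mod_lt _ ha, ?_⟩
    rw [smul_sub, ← hr, Finset.smul_sum, ← Finset.sum_sub_distrib]
    refine Finset.sum_congr rfl fun i _ => ?_
    rw [sub_eq_iff_eq_add, ← mul_smul, ← add_smul, Nat.mod_add_div]

theorem h13_countable {M : Type*} [AddMonoid M] (h : AddMonoid.FG M) : Countable M := by
  obtain ⟨S, hS, φ, hφ⟩ := AddMonoid.fg_iff_exists_freeAddMonoid_hom_surjective.mp h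
  have : Finite S := hS
  have : Countable (FreeAddMonoid S) := inferInstanceAs (Countable (List S))
  exact hφ.countable

theorem h13_small.{w, v} (T : Type v) [AddCommMonoid T] [Countable T] :
    ∃ (Q : Type w) (_ : AddCommMonoid Q), Nonempty (Q ≃+ T) :=
  ⟨Shrink.{w} T, inferInstance, ⟨Shrink.addEquiv⟩⟩

open Classical in
/-- the morphism to `{0, ∞}` sending nonzero elements to `∞`. -/
noncomputable def h13_ind {M : Type*} [AddCommMonoid M] (h : IsSharp M) :
    M →+ ULift (Additive (ZMod 2)) where
  toFun m := ⟨Additive.ofMul (if m = 0 then 1 else 0)⟩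
  map_zero' := by simp; rfl
  map_add' a b := by
    by_cases ha : a = 0
    · subst ha
      simp only [zero_add, if_true, ofMul_one]
      apply ULift.ext; simp
    · have : a + b ≠ 0 := fun hab => ha (h a (IsAddUnit.of_add_eq_zero b hab))
      simp only [ha, this, if_false]
      apply ULift.ext
      apply Additive.toMul.injective
      simp

theorem h13_ind_eq {M : Type*} [AddCommMonoid M] (h : IsSharp M) (m : M) :
    h13_ind h m = ⟨Additive.ofMul (by classical exact if m = 0 then 1 else 0)⟩ := rfl

theorem h13_ind_add {M L : Type*} [AddCommMonoid M] [AddCommMonoid L] (h : IsSharp M)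
    (h' : IsSharp L) (m : M) (l : L) (e : h13_ind h m + h13_ind h' l = 0) : m = 0 ∧ l = 0 := by
  rw [h13_ind_eq, h13_ind_eq] at e
  have e2 := congrArg (fun x => Additive.toMul (ULift.down x)) e
  by_cases hm : m = 0 <;> by_cases hl : l = 0 <;> simp [hm, hl] at e2 ⊢

/-- Let `L, M, N` be sharp fs monoids, `f : N → M`, `g : N → L` local morphisms, and
`P = M ⊔_N L` the push-out.  If `P` is quasi-integral, then `P^int` (the image of `P` in
its groupification) is sharp and fine, `P^sat` is fs, and the unit group `(P^sat)^×` is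
finite. -/
theorem stmt13 {N M L P Ngp Mgp Lgp Pgp : Type*}
    [AddCommMonoid N] [AddCommMonoid M] [AddCommMonoid L] [AddCommMonoid P]
    [AddCommGroup Ngp] [AddCommGroup Mgp] [AddCommGroup Lgp] [AddCommGroup Pgp]
    (ηN : N →+ Ngp) (hgpN : IsGroupification ηN) (hNinj : Function.Injective ηN)
    (hNsharp : IsSharp N) (hNfg : AddMonoid.FG N)
    (hNsat : ∀ x : Ngp, (∃ a : ℕ, 0 < a ∧ a • x ∈ AddMonoidHom.mrange ηN) →
      x ∈ AddMonoidHom.mrange ηN)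
    (ηM : M →+ Mgp) (hgpM : IsGroupification ηM) (hMinj : Function.Injective ηM)
    (hMsharp : IsSharp M) (hMfg : AddMonoid.FG M)
    (hMsat : ∀ x : Mgp, (∃ a : ℕ, 0 < a ∧ a • x ∈ AddMonoidHom.mrange ηM) →
      x ∈ AddMonoidHom.mrange ηM)
    (ηL : L →+ Lgp) (hgpL : IsGroupification ηL) (hLinj : Function.Injective ηL)
    (hLsharp : IsSharp L) (hLfg : AddMonoid.FG L)
    (hLsat : ∀ x : Lgp, (∃ a : ℕ, 0 < a ∧ a • x ∈ AddMonoidHom.mrange ηL) →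
      x ∈ AddMonoidHom.mrange ηL)
    (f : N →+ M) (g : N →+ L) (hf : IsLocalMonoidHom f) (hg : IsLocalMonoidHom g)
    (iM : M →+ P) (iL : L →+ P) (hpo : IsMonPushout f g iM iL)
    (ηP : P →+ Pgp) (hgpP : IsGroupification ηP)
    (hqi : ∀ p : P, ηP p = 0 → p = 0) :
    (∀ x ∈ AddMonoidHom.mrange ηP, -x ∈ AddMonoidHom.mrange ηP → x = 0) ∧
    (AddMonoidHom.mrange ηP).FG ∧
    (∀ x : Pgp,
      (∃ a : ℕ, 0 < a ∧ a • x ∈ saturationOf (↑(AddMonoidHom.mrange ηP) : Set Pgp)) →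
        x ∈ saturationOf (↑(AddMonoidHom.mrange ηP) : Set Pgp)) ∧
    (∃ S : Finset Pgp,
      (↑(AddSubmonoid.closure (S : Set Pgp)) : Set Pgp) =
        saturationOf (↑(AddMonoidHom.mrange ηP) : Set Pgp)) ∧
    Set.Finite {x : Pgp | x ∈ saturationOf (↑(AddMonoidHom.mrange ηP) : Set Pgp) ∧
      -x ∈ saturationOf (↑(AddMonoidHom.mrange ηP) : Set Pgp)} := by
  classical
  obtain ⟨hcomm, huniv⟩ := hpo
  have := hMfg
  have := hLfg
  -- the submonoid generated by the images of `M` and `L`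
  let T : AddSubmonoid Pgp :=
    AddMonoidHom.mrange ((ηP.comp iM).coprod (ηP.comp iL))
  have hTfg : AddMonoid.FG T := by
    have : AddMonoid.FG (M × L) := inferInstance
    exact AddMonoid.fg_range _
  have : Countable T := h13_countable hTfg
  have hTm : ∀ m, ηP (iM m) ∈ T := fun m => ⟨(m, 0), by simp⟩
  have hTl : ∀ l, ηP (iL l) ∈ T := fun l => ⟨(0, l), by simp⟩
  have hcomm' : ∀ n, iM (f n) = iL (g n) := fun n => DFunLike.congr_fun hcomm n
  have hrange : AddMonoidHom.mrange ηP = T := by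
    apply le_antisymm
    · obtain ⟨Q, _, ⟨es⟩⟩ := h13_small T
      obtain ⟨k, ⟨hkM, hkL⟩, -⟩ := huniv Q
        (es.symm.toAddMonoidHom.comp ((ηP.comp iM).codRestrict T hTm))
        (es.symm.toAddMonoidHom.comp ((ηP.comp iL).codRestrict T hTl))
        (by
          ext n
          simp [hcomm'])
      let k' : P →+ Pgp := T.subtype.comp (es.toAddMonoidHom.comp k)
      have hk'M : ∀ m, k' (iM m) = ηP (iM m) := fun m => by
        have := DFunLike.congr_fun hkM m
        simp only [AddMonoidHom.comp_apply] at this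
        simp only [k', AddMonoidHom.comp_apply, this]
        simp
      have hk'L : ∀ m, k' (iL m) = ηP (iL m) := fun m => by
        have := DFunLike.congr_fun hkL m
        simp only [AddMonoidHom.comp_apply] at this
        simp only [k', AddMonoidHom.comp_apply, this]
        simp
      rintro _ ⟨p, rfl⟩
      have : ηP p - k' p = 0 := by
        apply CharacterModule.eq_zero_of_character_apply
        intro c
        let c' : Pgp →+ ULift (AddCircle (1 : ℚ)) :=
          AddEquiv.ulift.symm.toAddMonoidHom.comp c
        obtain ⟨w, -, hw⟩ := huniv (ULift (AddCircle (1 : ℚ)))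
          ((c'.comp ηP).comp iM) ((c'.comp ηP).comp iL) (by ext n; simp [hcomm'])
        have h1 := hw (c'.comp ηP) ⟨rfl, rfl⟩
        have h2 := hw (c'.comp k') ⟨by ext m; simp [hk'M], by ext m; simp [hk'L]⟩
        have h3 := DFunLike.congr_fun (h1.trans h2.symm) p
        have h4 : c (ηP p) = c (k' p) := congrArg ULift.down h3
        rw [map_sub, h4, sub_self]
      rw [sub_eq_zero.mp this]
      exact (es (k p)).2
    · rintro _ ⟨⟨m, l⟩, rfl⟩
      exact ⟨iM m + iL l, by simp⟩
  have hTfg' : T.FG := (AddMonoid.fg_iff_addSubmonoid_fg T).mp hTfg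
  have hsharp : ∀ x ∈ AddMonoidHom.mrange ηP, -x ∈ AddMonoidHom.mrange ηP → x = 0 := by
    rw [hrange]
    rintro _ ⟨⟨m, l⟩, rfl⟩ ⟨⟨m', l'⟩, h⟩
    have h0 : iM (m + m') + iL (l + l') = 0 := by
      apply hqi
      have h' := eq_neg_iff_add_eq_zero.mp h
      simp only [AddMonoidHom.coprod_apply, AddMonoidHom.comp_apply] at h'
      rw [← h']
      simp only [map_add]
      abel
    obtain ⟨k, ⟨hkM, hkL⟩, -⟩ := huniv (ULift (Additive (ZMod 2)))
      (h13_ind hMsharp) (h13_ind hLsharp) (by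
        ext1 n
        have : f n = 0 ↔ g n = 0 := by
          constructor
          · intro h
            have := hNsharp n (hf n (by rw [h]; exact isAddUnit_zero))
            rw [this, map_zero]
          · intro h
            have := hNsharp n (hg n (by rw [h]; exact isAddUnit_zero))
            rw [this, map_zero]
        simp only [AddMonoidHom.comp_apply, h13_ind_eq, this])
    have e := congrArg k h0
    rw [map_add, map_zero, ← AddMonoidHom.comp_apply, ← AddMonoidHom.comp_apply k, hkM, hkL] at e
    obtain ⟨e1, e2⟩ := h13_ind_add _ _ _ _ e
    have hm : m = 0 := hMsharp m (IsAddUnit.of_add_eq_zero _ e1)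
    have hl : l = 0 := hLsharp l (IsAddUnit.of_add_eq_zero _ e2)
    subst hm hl
    simp
  have : AddGroup.FG Pgp := by
    obtain ⟨S, hS⟩ := hTfg'
    refine ⟨⟨S, ?_⟩⟩
    rw [eq_top_iff]
    rintro x -
    obtain ⟨a, b, rfl⟩ := hgpP.1 x
    have hle : T ≤ (AddSubgroup.closure (S : Set Pgp)).toAddSubmonoid := by
      rw [← hS, AddSubmonoid.closure_le]
      exact AddSubgroup.subset_closure
    have hm : ∀ p, ηP p ∈ AddSubgroup.closure (S : Set Pgp) := fun p =>
      hle (hrange ▸ ⟨p, rfl⟩)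
    exact AddSubgroup.sub_mem _ (hm a) (hm b)
  refine ⟨hsharp, hrange ▸ hTfg', ?_, h13_gordan _ (hrange ▸ hTfg'), ?_⟩
  · rintro x ⟨a, ha, b, hb, h⟩
    exact ⟨b * a, Nat.mul_pos hb ha, by rw [mul_smul]; exact h⟩
  · refine (h13_bounded_finite (∅ : Finset Pgp)).subset ?_
    rintro x ⟨⟨a, ha, hx⟩, b, hb, hy⟩
    refine ⟨b * a, Nat.mul_pos hb ha, 0, fun _ => Nat.mul_pos hb ha, ?_⟩
    rw [Finset.sum_empty]
    apply hsharp
    · rw [mul_smul]; exact AddSubmonoid.nsmul_mem _ hx _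
    · rw [mul_comm, mul_smul, ← smul_neg, ← smul_neg]; exact AddSubmonoid.nsmul_mem _ hy _
end
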